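/- arXiv:2504.19926 — 2 statements merged into one kernel-verified Lean document; each statement's English description precedes it below -/
import Mathlib

section
/- Let f, g ∈ F_q^{t₁} × ⋯ × F_q^{t_l}, let C₁ be the SGQC code over F_q generated by f and C₂ the SGQC code over F_q generated by g. Then the SGQC code C = (1−v)C₁ ⊕ vC₂ over S is a 1-generator SGQC code: C equals the SGQC code over S generated by the single element h = (1−v)·f + v·g. -/
/-!
The element `v` is idempotent and fixed by `θ`, so `1 - v` and `v` are complementary orthogonal
idempotents fixed by `θ`, and every element of `S` is `(1 - v) a + v b` with `a b : F`. In these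
coordinates `S` acts componentwise (`(a, b)` scales the `(1 - v)`-part by `a` and the `v`-part by
`b`) and `θ` acts as `a ↦ a ^ p ^ t` on both components. Hence `(1 - v) C₁ ⊕ v C₂` is an
`S`-submodule stable under the block shift, and it contains `h`; this gives one inclusion.
Conversely, for `e ∈ {1 - v, v}` the vectors `x` over `F` with `e x` in the code generated by `h`
form a shift-stable `F`-submodule (`idem_smul_mem_sgqcGen`). Since `(1 - v) h = (1 - v) f` and
`v h = v g`, it contains `f` or `g` respectively, hence `C₁` or `C₂`.
-/

open Polynomial

noncomputable section

/-- The ring `S = F[V]/(V² − V) = F + vF`. -/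
abbrev Sring (F : Type) [Field F] : Type := AdjoinRoot (X ^ 2 - X : F[X])

/-- The element `v` (the image of `V`) in `S`, satisfying `v ^ 2 = v`. -/
def vS (F : Type) [Field F] : Sring F := AdjoinRoot.root (X ^ 2 - X : F[X])

/-- The skew cyclic shift `σ(c₀, …, c_{n−1}) = (θ(c_{n−1}), θ(c₀), …, θ(c_{n−2}))`. -/
def sShift {R : Type} (θ : R → R) {n : ℕ} (c : Fin n → R) : Fin n → R :=
  fun i => θ (c ((finRotate n).symm i))

/-- The blockwise skew shift `σ_l`. -/
def blockShift {R : Type} (θ : R → R) {l : ℕ} {t : Fin l → ℕ}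
    (c : ∀ j : Fin l, Fin (t j) → R) : ∀ j : Fin l, Fin (t j) → R :=
  fun j => sShift θ (c j)

/-- `θ` is the Galois automorphism `a + v·b ↦ a^{p^t} + v·b^{p^t}` of `S`. -/
def IsGaloisAut (p t : ℕ) {F : Type} [Field F] (θ : RingAut (Sring F)) : Prop :=
  ∀ a b : F,
    θ (algebraMap F (Sring F) a + vS F * algebraMap F (Sring F) b) =
      algebraMap F (Sring F) (a ^ p ^ t) + vS F * algebraMap F (Sring F) (b ^ p ^ t)

/-- A set is an SGQC code iff it is (the carrier of) a submodule closed under `σ_l`. -/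
def IsSGQC {R : Type} [CommRing R] (θ : R → R) {l : ℕ} {t : Fin l → ℕ}
    (C : Set (∀ j : Fin l, Fin (t j) → R)) : Prop :=
  ∃ M : Submodule R (∀ j : Fin l, Fin (t j) → R),
    (M : Set (∀ j : Fin l, Fin (t j) → R)) = C ∧ ∀ c ∈ M, blockShift θ c ∈ M

/-- A set is a skew cyclic code iff it is (the carrier of) a submodule closed under `σ`. -/
def IsSkewCyclic {R : Type} [CommRing R] (θ : R → R) {n : ℕ} (K : Set (Fin n → R)) : Prop :=
  ∃ M : Submodule R (Fin n → R), (M : Set (Fin n → R)) = K ∧ ∀ x ∈ M, sShift θ x ∈ M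

/-- The Euclidean inner product. -/
def euclidInner {R : Type} [CommRing R] {l : ℕ} {t : Fin l → ℕ}
    (a b : ∀ j : Fin l, Fin (t j) → R) : R :=
  ∑ j, ∑ i, a j i * b j i

/-- The Hamming weight: the number of nonzero coordinates (over all blocks). -/
def hammingWt {R : Type} [CommRing R] {l : ℕ} {t : Fin l → ℕ}
    (x : ∀ j : Fin l, Fin (t j) → R) : ℕ :=
  ∑ j, Nat.card {i : Fin (t j) // x j i ≠ 0}

/-- The SGQC code generated by a set: the smallest submodule containing it closed under `σ_l`. -/
def sgqcGen {R : Type} [CommRing R] (θ : R → R) {l : ℕ} {t : Fin l → ℕ}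
    (X : Set (∀ j : Fin l, Fin (t j) → R)) : Submodule R (∀ j : Fin l, Fin (t j) → R) :=
  sInf {M | X ⊆ (M : Set _) ∧ ∀ c ∈ M, blockShift θ c ∈ M}

/-- The skew cyclic code generated by a set: the smallest submodule containing it closed under `σ`. -/
def scGen {R : Type} [CommRing R] (θ : R → R) {n : ℕ} (X : Set (Fin n → R)) :
    Submodule R (Fin n → R) :=
  sInf {M | X ⊆ (M : Set _) ∧ ∀ x ∈ M, sShift θ x ∈ M}

/-- The `w`-th Hermitian coefficient `H_w(u, v)`. -/
def hermCoeff {R : Type} [CommRing R] (θ : R → R) {l : ℕ} {t : Fin l → ℕ}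
    (ht : ∀ j, 0 < t j) (w : ℕ) (u v : ∀ j : Fin l, Fin (t j) → R) : R :=
  ∑ j, ∑ i : Fin (t j), u j ⟨((i : ℕ) + w) % t j, Nat.mod_lt _ (ht j)⟩ * θ^[w] (v j i)

lemma subset_sgqcGen {R : Type} [CommRing R] (θ : R → R) {l : ℕ} {t : Fin l → ℕ}
    (X : Set (∀ j : Fin l, Fin (t j) → R)) : X ⊆ (sgqcGen θ X : Set _) := by
  intro x hx
  simp only [sgqcGen, SetLike.mem_coe, Submodule.mem_sInf]
  exact fun M hM => hM.1 hx

lemma blockShift_mem_sgqcGen {R : Type} [CommRing R] (θ : R → R) {l : ℕ} {t : Fin l → ℕ}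
    (X : Set (∀ j : Fin l, Fin (t j) → R)) {c : ∀ j : Fin l, Fin (t j) → R}
    (hc : c ∈ sgqcGen θ X) : blockShift θ c ∈ sgqcGen θ X := by
  simp only [sgqcGen, Submodule.mem_sInf] at hc ⊢
  exact fun M hM => hM.2 c (hc M hM)

lemma sgqcGen_le {R : Type} [CommRing R] (θ : R → R) {l : ℕ} {t : Fin l → ℕ}
    {X : Set (∀ j : Fin l, Fin (t j) → R)} {M : Submodule R (∀ j : Fin l, Fin (t j) → R)}
    (hX : X ⊆ (M : Set _)) (hM : ∀ c ∈ M, blockShift θ c ∈ M) : sgqcGen θ X ≤ M :=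
  sInf_le ⟨hX, hM⟩

lemma vS_mul_self (F : Type) [Field F] : vS F * vS F = vS F := by
  have h : AdjoinRoot.mk (X ^ 2 - X : F[X]) (X ^ 2 - X) = 0 := AdjoinRoot.mk_self
  rw [map_sub, map_pow, AdjoinRoot.mk_X, sub_eq_zero] at h
  exact (pow_two _).symm.trans h

lemma exists_decomp {F : Type} [Field F] (s : Sring F) :
    ∃ a b : F, s = (1 - vS F) * algebraMap F (Sring F) a + vS F * algebraMap F (Sring F) b := by
  have hv := vS_mul_self F
  induction s using AdjoinRoot.induction_on with
  | ih q =>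
    induction q using Polynomial.induction_on with
    | C a =>
      refine ⟨a, a, ?_⟩
      rw [AdjoinRoot.mk_C, AdjoinRoot.algebraMap_eq]
      ring
    | add q r hq hr =>
      obtain ⟨a, b, h⟩ := hq
      obtain ⟨a', b', h'⟩ := hr
      refine ⟨a + a', b + b', ?_⟩
      rw [map_add, h, h', map_add, map_add]
      ring
    | monomial n a h =>
      -- Multiplication by `v` kills the `(1 - v)`-part and fixes the `v`-part.
      obtain ⟨a', b', h⟩ := h
      refine ⟨0, b', ?_⟩
      rw [pow_succ (X : F[X]) n, ← mul_assoc, map_mul, h, AdjoinRoot.mk_X, map_zero]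
      change _ * vS F = _
      linear_combination (algebraMap F (Sring F) b' - algebraMap F (Sring F) a') * hv

/-- If `e` is fixed by `θ` and `e h = e f` with `f` a vector over `F`, then `e` times the code
generated by `f` over `F` lies in the code generated by `h`. -/
lemma idem_smul_mem_sgqcGen {F : Type} [Field F] {φ : F → F} {θ : RingAut (Sring F)}
    (hθ : ∀ a, θ (algebraMap F (Sring F) a) = algebraMap F (Sring F) (φ a))
    {l : ℕ} {t : Fin l → ℕ} {e : Sring F} (he : θ e = e)
    {f : ∀ j : Fin l, Fin (t j) → F} {h : ∀ j : Fin l, Fin (t j) → Sring F}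
    (hf : e • h = fun j i => e * algebraMap F (Sring F) (f j i))
    {x : ∀ j : Fin l, Fin (t j) → F} (hx : x ∈ sgqcGen φ {f}) :
    (fun j i => e * algebraMap F (Sring F) (x j i)) ∈ sgqcGen θ {h} := by
  let M : Submodule F (∀ j : Fin l, Fin (t j) → F) :=
    { carrier := {x | (fun j i => e * algebraMap F (Sring F) (x j i)) ∈ sgqcGen θ {h}}
      zero_mem' := by
        change (fun j i => e * algebraMap F (Sring F) (0 : F)) ∈ sgqcGen θ {h}
        convert (sgqcGen θ {h}).zero_mem using 2 with j
        funext i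
        simp
      add_mem' := by
        intro a b ha hb
        change (fun j i => e * algebraMap F (Sring F) (a j i + b j i)) ∈ sgqcGen θ {h}
        convert (sgqcGen θ {h}).add_mem ha hb using 2 with j
        funext i
        simp [mul_add]
      smul_mem' := by
        intro c a ha
        change (fun j i => e * algebraMap F (Sring F) (c * a j i)) ∈ sgqcGen θ {h}
        convert (sgqcGen θ {h}).smul_mem (algebraMap F (Sring F) c) ha using 2 with j
        funext i
        simp only [Pi.smul_apply, smul_eq_mul, map_mul]
        ring }
  refine sgqcGen_le (M := M) φ ?_ ?_ hx
  · rintro _ rfl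
    change (fun j i => e * algebraMap F (Sring F) (_ : F)) ∈ sgqcGen θ {h}
    rw [← hf]
    exact Submodule.smul_mem _ _ (subset_sgqcGen _ _ rfl)
  · intro c hc
    change (fun j i => e * algebraMap F (Sring F) (blockShift φ c j i)) ∈ sgqcGen θ {h}
    convert blockShift_mem_sgqcGen _ _ hc using 2 with j
    funext i
    simp only [blockShift, sShift, map_mul, he, hθ]

/-- If `C₁` is the SGQC code over `F_q` generated by `f` and `C₂` the one
generated by `g`, then `C = (1−v)C₁ ⊕ vC₂` is a 1-generator SGQC code over `S`, generated by
the single element `h = (1−v)·f + v·g`. -/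
theorem statement14 (p d t : ℕ) [Fact p.Prime] (hd : 0 < d)
    (F : Type) [Field F] [Fintype F] (hF : Fintype.card F = p ^ d)
    (θ : RingAut (Sring F)) (hθ : IsGaloisAut p t θ)
    (l : ℕ) (tt : Fin l → ℕ) (htt : ∀ j, 0 < tt j)
    (f g : ∀ j : Fin l, Fin (tt j) → F) :
    {z : ∀ j : Fin l, Fin (tt j) → Sring F |
        ∃ x ∈ sgqcGen (fun a : F => a ^ p ^ t) {f},
          ∃ y ∈ sgqcGen (fun a : F => a ^ p ^ t) {g},
            z = fun j i =>
              (1 - vS F) * algebraMap F (Sring F) (x j i) +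
                vS F * algebraMap F (Sring F) (y j i)} =
      (sgqcGen (⇑θ)
          {fun j i =>
            (1 - vS F) * algebraMap F (Sring F) (f j i) +
              vS F * algebraMap F (Sring F) (g j i)} :
        Set (∀ j : Fin l, Fin (tt j) → Sring F)) := by
  have hv := vS_mul_self F
  have hp : p ^ t ≠ 0 := pow_ne_zero _ (Fact.out : p.Prime).ne_zero
  have hθF : ∀ a, θ (algebraMap F (Sring F) a) = algebraMap F (Sring F) (a ^ p ^ t) := by
    intro a
    have h := hθ a 0
    rwa [zero_pow hp, map_zero, mul_zero, add_zero, add_zero] at h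
  have hθv : θ (vS F) = vS F := by
    have h := hθ 0 1
    rwa [zero_pow hp, one_pow, map_zero, map_one, mul_one, zero_add] at h
  apply Set.Subset.antisymm
  · rintro _ ⟨x, hx, y, hy, rfl⟩
    refine Submodule.add_mem _
      (idem_smul_mem_sgqcGen hθF (e := 1 - vS F) ?_ ?_ hx)
      (idem_smul_mem_sgqcGen hθF (e := vS F) hθv ?_ hy)
    · rw [map_sub, map_one, hθv]
    · funext j i
      simp only [Pi.smul_apply, smul_eq_mul]
      linear_combination (algebraMap F (Sring F) (f j i) - algebraMap F (Sring F) (g j i)) * hv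
    · funext j i
      simp only [Pi.smul_apply, smul_eq_mul]
      linear_combination (algebraMap F (Sring F) (g j i) - algebraMap F (Sring F) (f j i)) * hv
  · let M : Submodule (Sring F) (∀ j : Fin l, Fin (tt j) → Sring F) :=
      { carrier := {z | ∃ x ∈ sgqcGen (fun a : F => a ^ p ^ t) {f},
          ∃ y ∈ sgqcGen (fun a : F => a ^ p ^ t) {g},
            z = fun j i =>
              (1 - vS F) * algebraMap F (Sring F) (x j i) +
                vS F * algebraMap F (Sring F) (y j i)}
        zero_mem' := by
          refine ⟨0, Submodule.zero_mem _, 0, Submodule.zero_mem _, ?_⟩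
          funext j i
          simp
        add_mem' := by
          rintro _ _ ⟨x, hx, y, hy, rfl⟩ ⟨x', hx', y', hy', rfl⟩
          refine ⟨x + x', Submodule.add_mem _ hx hx', y + y', Submodule.add_mem _ hy hy', ?_⟩
          funext j i
          simp only [Pi.add_apply, map_add]
          ring
        smul_mem' := by
          rintro s _ ⟨x, hx, y, hy, rfl⟩
          obtain ⟨a, b, rfl⟩ := exists_decomp s
          refine ⟨a • x, Submodule.smul_mem _ _ hx, b • y, Submodule.smul_mem _ _ hy, ?_⟩
          funext j i
          simp only [Pi.smul_apply, smul_eq_mul, map_mul]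
          linear_combination
            (algebraMap F (Sring F) a - algebraMap F (Sring F) b) *
              (algebraMap F (Sring F) (x j i) - algebraMap F (Sring F) (y j i)) * hv }
    refine sgqcGen_le (M := M) _ ?_ ?_
    · rintro _ rfl
      exact ⟨f, subset_sgqcGen _ _ rfl, g, subset_sgqcGen _ _ rfl, rfl⟩
    · rintro _ ⟨x, hx, y, hy, rfl⟩
      refine ⟨_, blockShift_mem_sgqcGen _ _ hx, _, blockShift_mem_sgqcGen _ _ hy, ?_⟩
      funext j i
      simp only [blockShift, sShift, map_add, map_mul, map_sub, map_one, hθv, hθF]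
end
end

section
/- Let M = lcm(m_t, t₁, …, t_l), where m_t is the multiplicative order of θ_t. Then for all u, v ∈ 𝐒 and every 0 ≤ w ≤ M−1, the w-th Hermitian coefficient satisfies H_w(u, v) = θ_t^w(⟨σ_l^{M−w}(u), v⟩). -/
/-! Iterating the skew shift gives `(σⁿ c)ᵢ = θⁿ(c_{i-n})`, indices modulo the block length. Since each
block length divides `M`, taking `n = M - k` turns the index `i - n` into `i + k`
(`sShift_iterate_apply`). Applying the ring automorphism `θᵏ` to the inner product termwise, the
power `θᵏ θ^{M-k} = θ^M` on the first factor is trivial because `orderOf θ ∣ M`. -/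


open Polynomial

noncomputable section

lemma val_finRotate_mod {n : ℕ} (i : Fin n) : ((finRotate n i : Fin n) : ℕ) = ((i : ℕ) + 1) % n := by
  cases n with
  | zero => exact i.elim0
  | succ m =>
    rw [finRotate_apply, Fin.val_add, Fin.val_one', Nat.add_mod_mod]

/-- The index `i - n` is written as `i + k` for any `k` with `m ∣ n + k`, which avoids subtraction
in `Fin m`. -/
lemma sShift_iterate_apply {R : Type} (θ : R → R) {m : ℕ} (hm : 0 < m) (c : Fin m → R) (n : ℕ) :
    ∀ (k : ℕ) (i : Fin m), m ∣ n + k →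
      (sShift θ)^[n] c i = θ^[n] (c ⟨((i : ℕ) + k) % m, Nat.mod_lt _ hm⟩) := by
  induction n with
  | zero =>
    intro k i h
    obtain ⟨q, rfl⟩ : m ∣ k := by simpa using h
    simp [Nat.mod_eq_of_lt i.isLt]
  | succ n ih =>
    intro k i h
    obtain ⟨i', rfl⟩ := (finRotate m).surjective i
    rw [Function.iterate_succ_apply', Function.iterate_succ_apply', sShift, Equiv.symm_apply_apply,
      ih (k + 1) i' (by rwa [Nat.add_right_comm] at h)]
    congr 4
    rw [val_finRotate_mod, Nat.mod_add_mod, Nat.add_right_comm, Nat.add_assoc]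

lemma blockShift_iterate_apply {R : Type} (θ : R → R) {l : ℕ} {t : Fin l → ℕ}
    (c : ∀ j : Fin l, Fin (t j) → R) (n : ℕ) (j : Fin l) :
    (blockShift θ)^[n] c j = (sShift θ)^[n] (c j) := by
  induction n with
  | zero => rfl
  | succ n ih => rw [Function.iterate_succ_apply', Function.iterate_succ_apply', blockShift, ih]

lemma ringAut_iterate {R : Type} [CommRing R] (θ : RingAut R) (n : ℕ) (y : R) :
    (⇑θ)^[n] y = (θ ^ n) y := by
  induction n with
  | zero => rfl
  | succ n ih => rw [Function.iterate_succ_apply', ih, pow_succ', RingAut.mul_apply]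

lemma ringAut_iterate_sum {R : Type} [CommRing R] (θ : RingAut R) (n : ℕ) {ι : Type}
    (s : Finset ι) (f : ι → R) : (⇑θ)^[n] (∑ i ∈ s, f i) = ∑ i ∈ s, (⇑θ)^[n] (f i) := by
  simp only [ringAut_iterate, map_sum]

/-- With `M = lcm(m_t, t₁, …, t_l)`, for all `u, v ∈ 𝐒` and `0 ≤ w ≤ M−1`,
the `w`-th Hermitian coefficient satisfies `H_w(u, v) = θ_t^w(⟨σ_l^{M−w}(u), v⟩)`. -/
theorem statement19 (p d t : ℕ) [Fact p.Prime] (hd : 0 < d)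
    (F : Type) [Field F] [Fintype F] (hF : Fintype.card F = p ^ d)
    (θ : RingAut (Sring F)) (hθ : IsGaloisAut p t θ)
    (l : ℕ) (tt : Fin l → ℕ) (htt : ∀ j, 0 < tt j)
    (M : ℕ) (hM : M = Nat.lcm (orderOf θ) (Finset.univ.lcm tt)) :
    ∀ u w : ∀ j : Fin l, Fin (tt j) → Sring F, ∀ k, k < M →
      hermCoeff (⇑θ) htt k u w =
        (⇑θ)^[k] (euclidInner ((blockShift (⇑θ))^[M - k] u) w) := by
  intro u w k hk
  have hθM : ∀ x, (⇑θ)^[M] x = x := by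
    intro x
    have h1 : θ ^ M = 1 := orderOf_dvd_iff_pow_eq_one.mp (hM ▸ Nat.dvd_lcm_left _ _)
    rw [ringAut_iterate, h1, RingAut.one_apply]
  have hdvd : ∀ j, tt j ∣ M - k + k := by
    intro j
    rw [Nat.sub_add_cancel hk.le, hM]
    exact (Finset.dvd_lcm (Finset.mem_univ j)).trans (Nat.dvd_lcm_right _ _)
  simp only [hermCoeff, euclidInner, ringAut_iterate_sum, iterate_map_mul]
  refine Finset.sum_congr rfl fun j _ => Finset.sum_congr rfl fun i _ => ?_
  rw [blockShift_iterate_apply, sShift_iterate_apply _ (htt j) _ _ k i (hdvd j),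
    ← Function.iterate_add_apply, Nat.add_sub_cancel' hk.le, hθM]
end
end
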